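/- arXiv:2004.06335 — 2 statements merged into one kernel-verified Lean document; each statement's English description precedes it below -/
import Mathlib

section
/- Let n ≥ 2 and λ ∈ Γ with λ₁ ≥ λ₂ ≥ … ≥ λₙ. Then for every index k with 2 ≤ k ≤ n one has (1/(n−1))·(1/μ₁(λ)) ≤ f_k(λ) ≤ 1/μ₁(λ). -/
open Finset

/-- `μ_k(λ) = (1/(n−1)) · ∑_{i ≠ k} λ_i`. -/
noncomputable def muOf (n : ℕ) (lam : Fin n → ℝ) (k : Fin n) : ℝ :=
  ((n : ℝ) - 1)⁻¹ * ∑ i ∈ Finset.univ.erase k, lam i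

/-- The cone `Γ = {λ ∈ ℝⁿ : μ_k(λ) > 0 for all k}`. -/
def GammaCone (n : ℕ) : Set (Fin n → ℝ) :=
  {lam | ∀ k, 0 < muOf n lam k}

/-- `f(λ) = ∑_k log μ_k(λ)`. -/
noncomputable def fOf (n : ℕ) (lam : Fin n → ℝ) : ℝ :=
  ∑ k, Real.log (muOf n lam k)

/-- `f_i(λ) = (1/(n−1)) · ∑_{k ≠ i} 1/μ_k(λ)`, the `i`-th partial derivative of `f`. -/
noncomputable def fDer (n : ℕ) (lam : Fin n → ℝ) (i : Fin n) : ℝ :=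
  ((n : ℝ) - 1)⁻¹ * ∑ k ∈ Finset.univ.erase i, (muOf n lam k)⁻¹

/-!
The gradient of `f` is the averaging map `μ` applied to `1/μ(λ)`: `f_k(λ) = μ_k(1/μ(λ))`. At an
index `i` where `λ` is largest, `μ` is smallest and hence `1/μ` is largest. An average is at most
the largest value and, all values being nonnegative, at least `1/(n-1)` times any one of them.
-/

section

variable {n : ℕ} {lam : Fin n → ℝ} {i j k : Fin n} {c : ℝ}

theorem muOf_le_muOf_of_le (h : lam j ≤ lam i) : muOf n lam i ≤ muOf n lam j := by
  have hn : (1 : ℝ) ≤ n := Nat.one_le_cast.2 i.pos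
  simp only [muOf, sum_erase_eq_sub (mem_univ _)]
  exact mul_le_mul_of_nonneg_left (sub_le_sub_left h _) (inv_nonneg.2 (sub_nonneg.2 hn))

theorem muOf_le_of_forall_le (hn : 2 ≤ n) (h : ∀ j ≠ k, lam j ≤ c) : muOf n lam k ≤ c := by
  have hn' : (1 : ℝ) < n := Nat.one_lt_cast.2 hn
  have hcard : ((#(univ.erase k) : ℕ) : ℝ) = n - 1 := by
    rw [cast_card_erase_of_mem (mem_univ k), card_fin]
  rw [muOf, inv_mul_le_iff₀ (sub_pos.2 hn'), ← hcard, ← nsmul_eq_mul]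
  exact sum_le_card_nsmul _ _ _ fun j hj => h j (ne_of_mem_erase hj)

theorem inv_mul_le_muOf_of_nonneg (h : ∀ j ≠ k, 0 ≤ lam j) (hik : i ≠ k) :
    ((n : ℝ) - 1)⁻¹ * lam i ≤ muOf n lam k := by
  have hn : (1 : ℝ) ≤ n := Nat.one_le_cast.2 k.pos
  refine mul_le_mul_of_nonneg_left ?_ (inv_nonneg.2 (sub_nonneg.2 hn))
  exact single_le_sum (fun j hj => h j (ne_of_mem_erase hj)) (mem_erase.2 ⟨hik, mem_univ i⟩)

theorem fDer_eq_muOf_inv : fDer n lam k = muOf n (fun j => (muOf n lam j)⁻¹) k :=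
  rfl

theorem stmt7_general (hlam : lam ∈ GammaCone n) (hmax : ∀ j, lam j ≤ lam i) (hki : k ≠ i) :
    ((n : ℝ) - 1)⁻¹ * (muOf n lam i)⁻¹ ≤ fDer n lam k ∧ fDer n lam k ≤ (muOf n lam i)⁻¹ := by
  have hn : 2 ≤ n := Fin.nontrivial_iff_two_le.1 ⟨k, i, hki⟩
  have hnonneg : ∀ j, 0 ≤ (muOf n lam j)⁻¹ := fun j => (inv_pos.2 (hlam j)).le
  have hle : ∀ j, (muOf n lam j)⁻¹ ≤ (muOf n lam i)⁻¹ := fun j =>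
    inv_anti₀ (hlam i) (muOf_le_muOf_of_le (hmax j))
  rw [fDer_eq_muOf_inv]
  exact ⟨inv_mul_le_muOf_of_nonneg (lam := fun j => (muOf n lam j)⁻¹) (fun j _ => hnonneg j)
    hki.symm, muOf_le_of_forall_le hn fun j _ => hle j⟩

end

theorem stmt7 (n : ℕ) (hn : 2 ≤ n) (lam : Fin n → ℝ) (hlam : lam ∈ GammaCone n)
    (hord : Antitone lam) :
    ∀ k : Fin n, k ≠ ⟨0, by omega⟩ →
      ((n : ℝ) - 1)⁻¹ * (muOf n lam ⟨0, by omega⟩)⁻¹ ≤ fDer n lam k ∧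
      fDer n lam k ≤ (muOf n lam ⟨0, by omega⟩)⁻¹ := by
  intro k hk
  exact stmt7_general hlam (fun j => hord (Fin.mk_le_of_le_val (Nat.zero_le j))) hk
end

section
/- Let n ≥ 2, let μ_k(λ) = (1/(n−1)) Σ_{i≠k} λ_i, Γ = {λ ∈ ℝⁿ : μ_k(λ) > 0 for all k}, f(λ) = Σ_k log μ_k(λ), and f_i = ∂f/∂λ_i. Let K be a compact subset of Γ and let c₁ ≤ c₂ be real constants. Then there exist constants R > 0 and κ ∈ (0,1), depending only on n, K, c₁, c₂, such that for every λ ∈ Γ with λ₁ ≥ λ₂ ≥ … ≥ λₙ, |λ| ≥ R and c₁ ≤ f(λ) ≤ c₂, and every χ ∈ K with χ₁ ≥ χ₂ ≥ … ≥ χₙ, at least one of the following holds: (a) Σ_{k=1}ⁿ f_k(λ)·(χ_k − λ_k) > κ·Σ_{k=1}ⁿ f_k(λ); or (b) f_k(λ) > κ·Σ_{i=1}ⁿ f_i(λ) for every k = 1,…,n. In addition, Σ_{i=1}ⁿ f_i(λ) ≥ κ. -/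
open Finset

/-!
The linear map `μ` is self-adjoint, fixes `(1, …, 1)`, and `∇f(λ) = μ(1/μ(λ))`. Hence
`∑ f_k(λ) χ_k = ∑ μ_k(χ) / μ_k(λ)`. Taking `χ = (1, …, 1)` and `χ = λ` gives
`∑ f_k(λ) = ∑ 1/μ_k(λ)` and `∑ f_k(λ) λ_k = n`, so `μ(χ) ≥ δ` implies
`∑ f_k(λ) (χ_k - λ_k) ≥ δ ∑ f_k(λ) - n`. This exceeds `κ ∑ f_k(λ)` for a given `κ < δ` as soon
as `∑ f_k(λ)` is large: the first alternative always holds. And `∑ f_k(λ)` is large for large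
`λ`: if all `1/μ_k(λ)` are at most `T`, then `∏ μ_k(λ) = exp f(λ) ≤ exp c` bounds every
`μ_k(λ)` from above, hence bounds `λ`.
-/

theorem le_exp_mul_pow_of_sum_log_le {ι : Type*} [Fintype ι] {x : ι → ℝ} (hx : ∀ i, 0 < x i)
    {c T : ℝ} (hc : ∑ i, Real.log (x i) ≤ c) (hT : ∀ i, (x i)⁻¹ ≤ T) (k : ι) :
    x k ≤ Real.exp c * T ^ (Fintype.card ι - 1) := by
  classical
  have prod_le : ∏ i, x i ≤ Real.exp c := by
    rw [← Real.log_le_iff_le_exp (prod_pos fun i _ ↦ hx i), Real.log_prod fun i _ ↦ (hx i).ne']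
    exact hc
  have prod_inv_le : ∏ i ∈ univ.erase k, (x i)⁻¹ ≤ T ^ (Fintype.card ι - 1) := by
    rw [← card_univ, ← card_erase_of_mem (mem_univ k)]
    exact (prod_le_prod (fun i _ ↦ (inv_pos.2 (hx i)).le) fun i _ ↦ hT i).trans_eq (prod_const T)
  calc x k = (∏ i, x i) * ∏ i ∈ univ.erase k, (x i)⁻¹ := by
        rw [← mul_prod_erase univ x (mem_univ k), prod_inv_distrib, mul_assoc,
          mul_inv_cancel₀ (prod_pos fun i _ ↦ hx i).ne', mul_one]
    _ ≤ Real.exp c * T ^ (Fintype.card ι - 1) :=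
        mul_le_mul prod_le prod_inv_le (prod_nonneg fun i _ ↦ (inv_pos.2 (hx i)).le)
          (Real.exp_pos c).le

section

variable {n : ℕ}

theorem muOf_eq_sum_sub (x : Fin n → ℝ) (k : Fin n) :
    muOf n x k = ((n : ℝ) - 1)⁻¹ * (∑ i, x i - x k) := by
  rw [muOf, sum_erase_eq_sub (mem_univ k)]

theorem continuous_muOf (k : Fin n) : Continuous fun x ↦ muOf n x k := by
  unfold muOf
  fun_prop

theorem sum_muOf_mul (x y : Fin n → ℝ) :
    ∑ k, muOf n x k * y k = ∑ k, x k * muOf n y k := by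
  simp only [muOf_eq_sum_sub, mul_left_comm (x _), mul_assoc, ← mul_sum, sub_mul, mul_sub,
    sum_sub_distrib, ← sum_mul]

theorem muOf_one (hn : n ≠ 1) (k : Fin n) : muOf n 1 k = 1 := by
  have hn' : (n : ℝ) - 1 ≠ 0 := sub_ne_zero.2 (mod_cast hn)
  simp [muOf_eq_sum_sub, hn']

theorem sum_muOf (hn : n ≠ 1) (x : Fin n → ℝ) : ∑ k, muOf n x k = ∑ k, x k := by
  simpa [muOf_one hn] using sum_muOf_mul x 1

theorem eq_sum_muOf_sub (hn : n ≠ 1) (x : Fin n → ℝ) (k : Fin n) :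
    x k = ∑ i, muOf n x i - ((n : ℝ) - 1) * muOf n x k := by
  have hn' : (n : ℝ) - 1 ≠ 0 := sub_ne_zero.2 (mod_cast hn)
  rw [sum_muOf hn, muOf_eq_sum_sub, mul_inv_cancel_left₀ hn', sub_sub_cancel]

theorem norm_le_of_muOf_le (hn : 2 ≤ n) {x : Fin n → ℝ} (hx : x ∈ GammaCone n) {B : ℝ}
    (hB : ∀ k, muOf n x k ≤ B) : ‖x‖ ≤ n * B := by
  have hn' : (0 : ℝ) ≤ n - 1 := by
    rw [sub_nonneg, Nat.one_le_cast]
    lia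
  have hB₀ : 0 ≤ B := (hx ⟨0, by lia⟩).le.trans (hB _)
  have sum_muOf_nonneg : 0 ≤ ∑ i, muOf n x i := sum_nonneg fun i _ ↦ (hx i).le
  have sum_muOf_le : ∑ i, muOf n x i ≤ n * B := by
    simpa using sum_le_card_nsmul univ (muOf n x) B fun i _ ↦ hB i
  refine (pi_norm_le_iff_of_nonneg (by positivity)).2 fun k ↦ ?_
  have mul_muOf_nonneg : 0 ≤ ((n : ℝ) - 1) * muOf n x k := mul_nonneg hn' (hx k).le
  have mul_muOf_le : ((n : ℝ) - 1) * muOf n x k ≤ (n - 1) * B :=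
    mul_le_mul_of_nonneg_left (hB k) hn'
  rw [eq_sum_muOf_sub (by lia) x k, Real.norm_eq_abs, abs_le]
  constructor <;> linarith

theorem exists_pos_forall_le_muOf {K : Set (Fin n → ℝ)} (hK : IsCompact K)
    (hKΓ : K ⊆ GammaCone n) : ∃ δ > 0, ∀ χ ∈ K, ∀ k, δ ≤ muOf n χ k := by
  have continuous_uncurry : Continuous fun p : (Fin n → ℝ) × Fin n ↦ muOf n p.1 p.2 :=
    continuous_prod_of_discrete_right.2 continuous_muOf
  obtain ⟨δ, hδ, hle⟩ := (hK.prod isCompact_univ).exists_forall_le'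
    continuous_uncurry.continuousOn fun p hp ↦ hKΓ hp.1 p.2
  exact ⟨δ, hδ, fun χ hχ k ↦ hle (χ, k) ⟨hχ, Set.mem_univ k⟩⟩

theorem fDer_eq_muOf_inv_s17 (x : Fin n → ℝ) : fDer n x = muOf n (muOf n x)⁻¹ := rfl

theorem sum_fDer_mul (x y : Fin n → ℝ) :
    ∑ k, fDer n x k * y k = ∑ k, (muOf n x k)⁻¹ * muOf n y k := by
  rw [fDer_eq_muOf_inv_s17, sum_muOf_mul]
  rfl

theorem sum_fDer (hn : n ≠ 1) (x : Fin n → ℝ) : ∑ k, fDer n x k = ∑ k, (muOf n x k)⁻¹ := by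
  rw [fDer_eq_muOf_inv_s17, sum_muOf hn]
  rfl

theorem sum_fDer_mul_self {x : Fin n → ℝ} (hx : ∀ k, muOf n x k ≠ 0) :
    ∑ k, fDer n x k * x k = n := by
  simp [sum_fDer_mul, hx]

theorem mul_sum_fDer_le (hn : n ≠ 1) {x χ : Fin n → ℝ} (hx : x ∈ GammaCone n) {δ : ℝ}
    (hχ : ∀ k, δ ≤ muOf n χ k) : δ * ∑ k, fDer n x k ≤ ∑ k, fDer n x k * χ k := by
  rw [sum_fDer hn, sum_fDer_mul, mul_comm, sum_mul]
  exact sum_le_sum fun k _ ↦ mul_le_mul_of_nonneg_left (hχ k) (inv_pos.2 (hx k)).le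

theorem mul_sum_fDer_sub_le (hn : n ≠ 1) {x χ : Fin n → ℝ} (hx : x ∈ GammaCone n) {δ : ℝ}
    (hχ : ∀ k, δ ≤ muOf n χ k) :
    δ * ∑ k, fDer n x k - n ≤ ∑ k, fDer n x k * (χ k - x k) := by
  simp only [mul_sub, sum_sub_distrib, sum_fDer_mul_self fun k ↦ (hx k).ne']
  exact sub_le_sub_right (mul_sum_fDer_le hn hx hχ) _

theorem norm_le_of_sum_fDer_le (hn : 2 ≤ n) {x : Fin n → ℝ} (hx : x ∈ GammaCone n) {c T : ℝ}
    (hc : fOf n x ≤ c) (hT : ∑ k, fDer n x k ≤ T) :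
    ‖x‖ ≤ n * (Real.exp c * T ^ (n - 1)) := by
  have inv_le (k : Fin n) : (muOf n x k)⁻¹ ≤ T :=
    calc (muOf n x k)⁻¹ ≤ ∑ i, (muOf n x i)⁻¹ :=
          single_le_sum (f := fun i ↦ (muOf n x i)⁻¹) (fun i _ ↦ (inv_pos.2 (hx i)).le)
            (mem_univ k)
      _ = ∑ i, fDer n x i := (sum_fDer (by lia) x).symm
      _ ≤ T := hT
  refine norm_le_of_muOf_le hn hx fun k ↦ ?_
  simpa using le_exp_mul_pow_of_sum_log_le hx hc inv_le k

theorem exists_forall_lt_sum_fDer (hn : 2 ≤ n) (c T : ℝ) :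
    ∃ R > 0, ∀ x ∈ GammaCone n, R ≤ ‖x‖ → fOf n x ≤ c → T < ∑ k, fDer n x k := by
  obtain ⟨R, hR⟩ := exists_gt (max 0 (n * (Real.exp c * T ^ (n - 1))))
  obtain ⟨R_pos, lt_R⟩ := max_lt_iff.1 hR
  refine ⟨R, R_pos, fun x hx hRx hc ↦ ?_⟩
  by_contra! hT
  exact (norm_le_of_sum_fDer_le hn hx hc hT).not_gt (lt_R.trans_le hRx)

end

theorem stmt17_general (n : ℕ) (hn : 2 ≤ n) (K : Set (Fin n → ℝ)) {δ : ℝ} (hδ : 0 < δ)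
    (hK : ∀ χ ∈ K, ∀ k, δ ≤ muOf n χ k) (c : ℝ) :
    ∃ R : ℝ, 0 < R ∧ ∃ κ ∈ Set.Ioo (0 : ℝ) 1,
      ∀ lam ∈ GammaCone n, R ≤ ‖lam‖ → fOf n lam ≤ c →
        ∀ χ ∈ K, κ * ∑ k, fDer n lam k < ∑ k, fDer n lam k * (χ k - lam k) ∧
          κ ≤ ∑ i, fDer n lam i := by
  obtain ⟨κ, κ_pos, κ_lt⟩ := exists_between (lt_min hδ one_pos)
  obtain ⟨κ_lt_δ, κ_lt_one⟩ := lt_min_iff.1 κ_lt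
  obtain ⟨R, R_pos, hR⟩ := exists_forall_lt_sum_fDer hn c (max κ (n / (δ - κ)))
  refine ⟨R, R_pos, κ, ⟨κ_pos, κ_lt_one⟩, fun lam hlam hRlam hc χ hχ ↦ ?_⟩
  obtain ⟨κ_lt_sum, div_lt_sum⟩ := max_lt_iff.1 (hR lam hlam hRlam hc)
  have n_lt : n < (∑ k, fDer n lam k) * (δ - κ) := (div_lt_iff₀ (sub_pos.2 κ_lt_δ)).1 div_lt_sum
  have sub_le_pairing := mul_sum_fDer_sub_le (by lia) hlam (hK χ hχ)
  exact ⟨by linarith, κ_lt_sum.le⟩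

theorem stmt17 (n : ℕ) (hn : 2 ≤ n) (K : Set (Fin n → ℝ)) (hKcpt : IsCompact K)
    (hKsub : K ⊆ GammaCone n) (c₁ c₂ : ℝ) (hc : c₁ ≤ c₂) :
    ∃ R : ℝ, 0 < R ∧ ∃ κ ∈ Set.Ioo (0 : ℝ) 1,
      ∀ lam ∈ GammaCone n, Antitone lam → R ≤ ‖lam‖ →
        c₁ ≤ fOf n lam → fOf n lam ≤ c₂ →
        ∀ χ ∈ K, Antitone χ →
          ((κ * ∑ k, fDer n lam k < ∑ k, fDer n lam k * (χ k - lam k)) ∨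
           (∀ k, κ * ∑ i, fDer n lam i < fDer n lam k)) ∧
          κ ≤ ∑ i, fDer n lam i := by
  obtain ⟨δ, hδ, hK⟩ := exists_pos_forall_le_muOf hKcpt hKsub
  obtain ⟨R, hR, κ, hκ, h⟩ := stmt17_general n hn K hδ hK c₂
  exact ⟨R, hR, κ, hκ, fun lam hlam _ hRlam _ hf χ hχ _ ↦
    (h lam hlam hRlam hf χ hχ).imp_left .inl⟩
end
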